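/- arXiv:2003.12991 — 2 statements merged into one kernel-verified Lean document; each statement's English description precedes it below -/
import Mathlib

section
/- Let n ≥ 3 be odd and let m_1, m_2 be positive integers with m_1 < F_{n-1} and m_2 < F_{n-1}. Set c_1 = F_{n+1} m_1 + F_n m_2 and c_2 = F_n m_1 + F_{n-1} m_2. Then for an integer h, the ratio (c_1 + h)/c_2 lies in the open interval (F_{n+1}/F_n, F_n/F_{n-1}) if and only if h = 0. -/
/-!
Write `a = F_{n-1}` and `b = F_n`, so `F_{n+1} = a + b`. Cassini's identity for odd `n` reads
`b ^ 2 = a ^ 2 + a * b + 1` and gives `b * c₁ - (a + b) * c₂ = m₂` and `b * c₂ - a * c₁ = m₁`.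
After clearing denominators, membership in the interval therefore says `0 < m₂ + b * h` and
`a * h < m₁`. As `0 < m₁ < a` and `0 < m₂ < a ≤ b`, the only integer satisfying both is `h = 0`.
-/

/-- Cassini's identity at the odd index `2 * k + 1`, with `F_{2k+2}` expanded. -/
theorem fib_cassini_odd (k : ℕ) :
    (Nat.fib (2 * k + 1) : ℤ) ^ 2 =
      (Nat.fib (2 * k) : ℤ) ^ 2 + Nat.fib (2 * k) * Nat.fib (2 * k + 1) + 1 := by
  induction k with
  | zero => simp
  | succ k ih =>
    have h2 : Nat.fib (2 * (k + 1)) = Nat.fib (2 * k) + Nat.fib (2 * k + 1) := Nat.fib_add_two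
    have h3 : Nat.fib (2 * (k + 1) + 1) = Nat.fib (2 * k + 1) + Nat.fib (2 * (k + 1)) :=
      Nat.fib_add_two
    rw [h3, h2]
    push_cast
    linear_combination ih

theorem stmt_6 (n : ℕ) (hn : 3 ≤ n) (hodd : Odd n)
    (m₁ m₂ : ℤ) (hm₁ : 0 < m₁) (hm₂ : 0 < m₂)
    (hm₁' : m₁ < (Nat.fib (n - 1) : ℤ)) (hm₂' : m₂ < (Nat.fib (n - 1) : ℤ))
    (c₁ c₂ : ℤ)
    (hc₁ : c₁ = (Nat.fib (n + 1) : ℤ) * m₁ + (Nat.fib n : ℤ) * m₂)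
    (hc₂ : c₂ = (Nat.fib n : ℤ) * m₁ + (Nat.fib (n - 1) : ℤ) * m₂)
    (h : ℤ) :
    (((c₁ : ℝ) + (h : ℝ)) / (c₂ : ℝ) ∈
      Set.Ioo ((Nat.fib (n + 1) : ℝ) / (Nat.fib n : ℝ))
              ((Nat.fib n : ℝ) / (Nat.fib (n - 1) : ℝ))) ↔ h = 0 := by
  obtain ⟨k, rfl⟩ := hodd
  have hcas := fib_cassini_odd k
  have hab : (Nat.fib (2 * k) : ℤ) ≤ Nat.fib (2 * k + 1) := by exact_mod_cast Nat.fib_le_fib_succ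
  have hfib : Nat.fib (2 * k + 1 + 1) = Nat.fib (2 * k) + Nat.fib (2 * k + 1) := Nat.fib_add_two
  rw [Nat.add_sub_cancel] at hm₁' hm₂' hc₂ ⊢
  rw [hfib] at hc₁ ⊢
  clear hfib
  generalize Nat.fib (2 * k) = a at *
  generalize Nat.fib (2 * k + 1) = b at *
  push_cast at hc₁ ⊢
  have ha : (0 : ℤ) < a := hm₁.trans hm₁'
  have hb : (0 : ℤ) < b := ha.trans_le hab
  have hc : 0 < c₂ := by rw [hc₂]; positivity
  have haR : (0 : ℝ) < a := by exact_mod_cast ha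
  have hbR : (0 : ℝ) < b := by exact_mod_cast hb
  have hcR : (0 : ℝ) < c₂ := by exact_mod_cast hc
  have e₁ : (b : ℤ) * c₁ - (a + b) * c₂ = m₂ := by
    rw [hc₁, hc₂]; linear_combination m₂ * hcas
  have e₂ : (b : ℤ) * c₂ - a * c₁ = m₁ := by
    rw [hc₁, hc₂]; linear_combination m₁ * hcas
  rw [Set.mem_Ioo, div_lt_div_iff₀ hbR hcR, div_lt_div_iff₀ hcR haR]
  norm_cast
  constructor
  · rintro ⟨h₁, h₂⟩
    push_cast at h₁ h₂
    have hlo : -1 < h := by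
      by_contra! hle
      nlinarith
    have hhi : h < 1 := by
      by_contra! hge
      nlinarith
    omega
  · rintro rfl
    push_cast
    constructor <;> linarith
end

section
/- Let n ≥ 3 be odd, let m_1, m_2 be positive integers with m_1 < F_{n-1} and m_2 < F_{n-1}, and set c_1 = F_{n+1} m_1 + F_n m_2, c_2 = F_n m_1 + F_{n-1} m_2. Let e_2 be an integer and put c̄_2 = c_2 + e_2. If c̄_2 > 0 and c_1/c̄_2 < F_{n+1}/F_n (as real numbers), then e_2 = ⌈c̄_2 - c_1·F_n/F_{n+1}⌉, the ceiling of the real number c̄_2 - c_1·F_n/F_{n+1}. -/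
/-!
Substituting `c₁` and `c₂`, the `m₁` terms cancel and
`c̄₂ - c₁ F_n / F_{n+1} = e₂ + m₂ (F_{n-1} F_{n+1} - F_n²) / F_{n+1}`.
Cassini's identity for odd `n` (`cassini_odd`) turns this into `e₂ - m₂ / F_{n+1}`, and
`0 < m₂ < F_{n-1} ≤ F_{n+1}`, so the ceiling is `e₂`.
-/

/-- Cassini's identity at the odd index `2k + 1`. -/
theorem cassini_odd (k : ℕ) :
    Nat.fib (2 * k) * Nat.fib (2 * k + 2) + 1 = Nat.fib (2 * k + 1) ^ 2 := by
  induction k with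
  | zero => simp
  | succ k ih =>
    have h2 : Nat.fib (2 * k + 2) = Nat.fib (2 * k) + Nat.fib (2 * k + 1) := Nat.fib_add_two
    have h3 : Nat.fib (2 * k + 3) = Nat.fib (2 * k + 1) + Nat.fib (2 * k + 2) := Nat.fib_add_two
    have h4 : Nat.fib (2 * k + 4) = Nat.fib (2 * k + 2) + Nat.fib (2 * k + 3) := Nat.fib_add_two
    change Nat.fib (2 * k + 2) * Nat.fib (2 * k + 4) + 1 = Nat.fib (2 * k + 3) ^ 2
    rw [h4, h3]
    rw [h2] at ih ⊢
    nlinarith [ih]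

theorem stmt_12 (n : ℕ) (hn : 3 ≤ n) (hodd : Odd n)
    (m₁ m₂ : ℤ) (hm₁ : 0 < m₁) (hm₂ : 0 < m₂)
    (hm₁' : m₁ < (Nat.fib (n - 1) : ℤ)) (hm₂' : m₂ < (Nat.fib (n - 1) : ℤ))
    (c₁ c₂ : ℤ)
    (hc₁ : c₁ = (Nat.fib (n + 1) : ℤ) * m₁ + (Nat.fib n : ℤ) * m₂)
    (hc₂ : c₂ = (Nat.fib n : ℤ) * m₁ + (Nat.fib (n - 1) : ℤ) * m₂)
    (e₂ : ℤ) (cbar₂ : ℤ) (hbar : cbar₂ = c₂ + e₂)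
    (hpos : 0 < cbar₂)
    (hratio : (c₁ : ℝ) / (cbar₂ : ℝ) < (Nat.fib (n + 1) : ℝ) / (Nat.fib n : ℝ)) :
    e₂ = ⌈(cbar₂ : ℝ) - (c₁ : ℝ) * ((Nat.fib n : ℝ) / (Nat.fib (n + 1) : ℝ))⌉ := by
  have hF : (0 : ℝ) < Nat.fib (n + 1) := by
    exact_mod_cast Nat.fib_pos.mpr (Nat.succ_pos n)
  have hC : (Nat.fib (n - 1) : ℝ) * Nat.fib (n + 1) + 1 = (Nat.fib n : ℝ) ^ 2 := by
    obtain ⟨k, rfl⟩ := hodd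
    exact_mod_cast cassini_odd k
  have hlt : (m₂ : ℝ) < Nat.fib (n + 1) := by
    have hmono : (Nat.fib (n - 1) : ℤ) ≤ Nat.fib (n + 1) := by
      exact_mod_cast Nat.fib_mono (by omega)
    exact_mod_cast hm₂'.trans_le hmono
  have hm₂R : (0 : ℝ) < m₂ := by exact_mod_cast hm₂
  have key : (cbar₂ : ℝ) - (c₁ : ℝ) * ((Nat.fib n : ℝ) / (Nat.fib (n + 1) : ℝ))
      = e₂ - m₂ / Nat.fib (n + 1) := by
    rw [hbar, hc₂, hc₁]
    push_cast
    field_simp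
    linear_combination (m₂ : ℝ) * hC
  have h0 : (0 : ℝ) < m₂ / Nat.fib (n + 1) := div_pos hm₂R hF
  have h1 : (m₂ : ℝ) / Nat.fib (n + 1) < 1 := (div_lt_one hF).mpr hlt
  rw [key, eq_comm, Int.ceil_eq_iff]
  constructor <;> linarith
end
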